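/- Let x be a solution of the heavy ball equation with vanishing damping and source term g satisfying ∫₀^∞ (1+t)^α ‖g(t)‖ dt < ∞. Then ∫₀^∞ (1+t)^α ‖x'(t)‖² dt < ∞. -/

import Mathlib

open MeasureTheory Filter Real Set RealInnerProductSpace

/-!
Write the damping as `c / p` and fix a minimizer `z` of `Φ`. With the anchored momentum
`w = p x' + 2 p' (x - z)`, consider
`V = p² (Φ(x) - Φ(z)) + ‖w‖² / 2 + (c p' - 3 p'² - p p'') ‖x - z‖²`.
The coefficient of `‖x - z‖²` is the one for which the terms in `⟪x', x - z⟫` cancel in `V'`, and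
convexity of `Φ` makes the potential terms nonpositive. If `p' ≥ 0`, `p'' ≤ 0`, `p''' ≥ 0` and
`p' ≤ θ < c / 3`, what remains is `V' ≤ -(c - 3θ) p ‖x'‖² + p ⟪g, w⟫`, where
`⟪g, w⟫ ≤ ‖g‖ (1 + V)`. As `p ‖g‖` is integrable, Grönwall's inequality bounds `V`, and
integrating once more bounds `∫ p ‖x'‖²`. The weight `p t = (1 + t) ^ α` qualifies because its
derivative tends to zero.
-/

section Gronwall

variable {V V' F b : ℝ → ℝ} {u v T : ℝ}

theorem le_mul_exp_integral_of_deriv_right_le_mul (huv : u ≤ v) (hVc : ContinuousOn V (Icc u v))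
    (hV : ∀ t ∈ Ioo u v, HasDerivWithinAt V (V' t) (Ioi t) t) (hVpos : ∀ t ∈ Icc u v, 0 < V t)
    (hb : IntegrableOn b (Icc u v)) (hle : ∀ t ∈ Ioo u v, V' t ≤ b t * V t) :
    V v ≤ V u * exp (∫ t in u..v, b t) := by
  have hlog : log (V v) - log (V u) ≤ ∫ t in u..v, b t :=
    intervalIntegral.sub_le_integral_of_hasDeriv_right_of_le huv
      (hVc.log fun t ht ↦ (hVpos t ht).ne')
      (fun t ht ↦ (hV t ht).log (hVpos t (Ioo_subset_Icc_self ht)).ne') hb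
      (fun t ht ↦ (div_le_iff₀ (hVpos t (Ioo_subset_Icc_self ht))).2 (hle t ht))
  have hu := hVpos u (left_mem_Icc.2 huv)
  have hv := hVpos v (right_mem_Icc.2 huv)
  calc V v = exp (log (V v)) := (exp_log hv).symm
    _ ≤ exp (log (V u) + ∫ t in u..v, b t) := exp_le_exp.2 (by linarith)
    _ = V u * exp (∫ t in u..v, b t) := by rw [exp_add, exp_log hu]

theorem intervalIntegral_le_setIntegral_Ici (hb : IntegrableOn b (Ici T))
    (hb0 : ∀ t ∈ Ici T, 0 ≤ b t) (hv : T ≤ v) : ∫ t in T..v, b t ≤ ∫ t in Ici T, b t := by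
  rw [intervalIntegral.integral_of_le hv]
  refine setIntegral_mono_set hb ?_ (Ioc_subset_Ioi_self.trans Ioi_subset_Ici_self).eventuallyLE
  filter_upwards [ae_restrict_mem measurableSet_Ici] with t ht using hb0 t ht

theorem le_mul_exp_setIntegral_Ici_of_deriv_right_le_mul (hVc : ContinuousOn V (Ici T))
    (hV : ∀ t ∈ Ioi T, HasDerivWithinAt V (V' t) (Ioi t) t) (hVpos : ∀ t ∈ Ici T, 0 < V t)
    (hb : IntegrableOn b (Ici T)) (hb0 : ∀ t ∈ Ici T, 0 ≤ b t)
    (hle : ∀ t ∈ Ioi T, V' t ≤ b t * V t) (hv : v ∈ Ici T) :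
    V v ≤ V T * exp (∫ t in Ici T, b t) := calc
  V v ≤ V T * exp (∫ t in T..v, b t) :=
    le_mul_exp_integral_of_deriv_right_le_mul hv (hVc.mono Icc_subset_Ici_self)
      (fun t ht ↦ hV t ht.1) (fun t ht ↦ hVpos t ht.1) (hb.mono_set Icc_subset_Ici_self)
      (fun t ht ↦ hle t ht.1)
  _ ≤ V T * exp (∫ t in Ici T, b t) :=
    mul_le_mul_of_nonneg_left
      (exp_le_exp.2 (intervalIntegral_le_setIntegral_Ici hb hb0 hv)) (hVpos T self_mem_Ici).le

theorem integrableOn_Ici_of_intervalIntegral_le (hF : LocallyIntegrableOn F (Ici T))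
    (hF0 : ∀ t ∈ Ici T, 0 ≤ F t) (C : ℝ) (hC : ∀ v, T ≤ v → ∫ t in T..v, F t ≤ C) :
    IntegrableOn F (Ici T) := by
  rw [integrableOn_Ici_iff_integrableOn_Ioi]
  refine integrableOn_Ioi_of_intervalIntegral_norm_bounded C T (b := id) (fun v ↦ ?_) tendsto_id ?_
  · exact (hF.integrableOn_compact_subset Icc_subset_Ici_self isCompact_Icc).mono_set
      Ioc_subset_Icc_self
  · filter_upwards [eventually_ge_atTop T] with v hv
    refine (intervalIntegral.integral_congr fun t ht ↦ ?_).trans_le (hC v hv)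
    rw [id, uIcc_of_le hv] at ht
    exact norm_of_nonneg (hF0 t ht.1)

theorem integrableOn_Ici_of_deriv_right_le_neg_add_mul (hVc : ContinuousOn V (Ici T))
    (hV : ∀ t ∈ Ioi T, HasDerivWithinAt V (V' t) (Ioi t) t) (hV0 : ∀ t ∈ Ici T, 0 ≤ V t)
    (hF : LocallyIntegrableOn F (Ici T)) (hF0 : ∀ t ∈ Ici T, 0 ≤ F t)
    (hb : IntegrableOn b (Ici T)) (hb0 : ∀ t ∈ Ici T, 0 ≤ b t)
    (hle : ∀ t ∈ Ioi T, V' t ≤ -F t + b t * (1 + V t)) :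
    IntegrableOn F (Ici T) := by
  set M := (1 + V T) * exp (∫ t in Ici T, b t)
  have hVT : 0 ≤ V T := hV0 T self_mem_Ici
  have hVM (v : ℝ) (hv : v ∈ Ici T) : 1 + V v ≤ M :=
    le_mul_exp_setIntegral_Ici_of_deriv_right_le_mul (V := fun t ↦ 1 + V t)
      (continuousOn_const.add hVc) (fun t ht ↦ (hV t ht).const_add 1)
      (fun t ht ↦ by linarith [hV0 t ht]) hb hb0
      (fun t ht ↦ by linarith [hle t ht, hF0 t (mem_Ici_of_Ioi ht)]) hv
  refine integrableOn_Ici_of_intervalIntegral_le hF hF0 (V T + (∫ t in Ici T, b t) * M)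
    fun v hv ↦ ?_
  have hFi : IntegrableOn F (Icc T v) :=
    hF.integrableOn_compact_subset Icc_subset_Ici_self isCompact_Icc
  have hbi : IntegrableOn (fun t ↦ b t * M) (Icc T v) :=
    (hb.mono_set Icc_subset_Ici_self).mul_const M
  have hFTC : V v - V T ≤ ∫ t in T..v, (b t * M - F t) :=
    intervalIntegral.sub_le_integral_of_hasDeriv_right_of_le hv (hVc.mono Icc_subset_Ici_self)
      (fun t ht ↦ hV t ht.1) (hbi.sub hFi) fun t ht ↦ by
        have htT : t ∈ Ici T := mem_Ici_of_Ioi ht.1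
        linarith [hle t ht.1, mul_le_mul_of_nonneg_left (hVM t htT) (hb0 t htT)]
  rw [intervalIntegral.integral_sub
    ((intervalIntegrable_iff_integrableOn_Icc_of_le hv).2 hbi)
    ((intervalIntegrable_iff_integrableOn_Icc_of_le hv).2 hFi),
    intervalIntegral.integral_mul_const] at hFTC
  have hbM : (∫ t in T..v, b t) * M ≤ (∫ t in Ici T, b t) * M := by
    gcongr
    exact intervalIntegral_le_setIntegral_Ici hb hb0 hv
  linarith [hV0 v hv]

end Gronwall

/-- The functions `p`, `p'`, `p''`, `p'''` are a positive weight on `[a, ∞)` and its first three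
derivatives, which are nonnegative, nonpositive and nonnegative respectively. The damping
coefficient of the heavy ball equation is taken of the form `c / p`. -/
structure IsDampingWeight (a : ℝ) (p p' p'' p''' : ℝ → ℝ) : Prop where
  pos : ∀ t ∈ Ici a, 0 < p t
  hasDerivAt : ∀ t ∈ Ici a, HasDerivAt p (p' t) t
  hasDerivAt_deriv : ∀ t ∈ Ici a, HasDerivAt p' (p'' t) t
  hasDerivAt_deriv_deriv : ∀ t ∈ Ici a, HasDerivAt p'' (p''' t) t
  deriv_nonneg : ∀ t ∈ Ici a, 0 ≤ p' t
  deriv_deriv_nonpos : ∀ t ∈ Ici a, p'' t ≤ 0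
  deriv_deriv_deriv_nonneg : ∀ t ∈ Ici a, 0 ≤ p''' t

theorem hasDerivAt_const_mul_one_add_rpow (k r : ℝ) {t : ℝ} (ht : 0 ≤ t) :
    HasDerivAt (fun t ↦ k * (1 + t) ^ r) (k * r * (1 + t) ^ (r - 1)) t := by
  have hpos : 0 < 1 + t := by linarith
  have h := (((hasDerivAt_id t).const_add 1).rpow_const (p := r) (Or.inl hpos.ne')).const_mul k
  exact h.congr_deriv (by simp only [id]; ring)

theorem isDampingWeight_one_add_rpow {α : ℝ} (hα0 : 0 ≤ α) (hα1 : α ≤ 1) :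
    IsDampingWeight 0 (fun t ↦ (1 + t) ^ α) (fun t ↦ α * (1 + t) ^ (α - 1))
      (fun t ↦ α * (α - 1) * (1 + t) ^ (α - 1 - 1))
      (fun t ↦ α * (α - 1) * (α - 1 - 1) * (1 + t) ^ (α - 1 - 1 - 1)) := by
  have hpow (t : ℝ) (ht : t ∈ Ici 0) (r : ℝ) : 0 < (1 + t) ^ r :=
    rpow_pos_of_pos (by linarith [mem_Ici.1 ht]) r
  have hα : α * (α - 1) ≤ 0 := mul_nonpos_of_nonneg_of_nonpos hα0 (by linarith)
  refine ⟨fun t ht ↦ hpow t ht _, fun t ht ↦ ?_,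
    fun t ht ↦ hasDerivAt_const_mul_one_add_rpow _ _ ht,
    fun t ht ↦ hasDerivAt_const_mul_one_add_rpow _ _ ht,
    fun t ht ↦ mul_nonneg hα0 (hpow t ht _).le,
    fun t ht ↦ mul_nonpos_of_nonpos_of_nonneg hα (hpow t ht _).le,
    fun t ht ↦ mul_nonneg (mul_nonneg_of_nonpos_of_nonpos hα (by linarith)) (hpow t ht _).le⟩
  simpa only [one_mul] using hasDerivAt_const_mul_one_add_rpow 1 α ht

theorem tendsto_const_mul_one_add_rpow_atTop_zero (k : ℝ) {r : ℝ} (hr : r < 0) :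
    Tendsto (fun t : ℝ ↦ k * (1 + t) ^ r) atTop (nhds 0) := by
  have h : Tendsto (fun t : ℝ ↦ (1 + t) ^ r) atTop (nhds 0) := by
    simpa only [neg_neg, Function.comp_def, id] using (tendsto_rpow_neg_atTop (neg_pos.2 hr)).comp
      (tendsto_atTop_add_const_left atTop (1 : ℝ) tendsto_id)
  simpa only [mul_zero] using h.const_mul k

/-- The curve `x`, with velocity `x'` and acceleration `x''`, solves
`x'' + γ x' + ∇Φ(x) = g` on `[a, ∞)`, where `Φ'` stands for the gradient of the potential. -/
structure IsHeavyBallSolution {H : Type*} [NormedAddCommGroup H] [NormedSpace ℝ H]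
    (a : ℝ) (γ : ℝ → ℝ) (Φ' : H → H) (g x x' x'' : ℝ → H) : Prop where
  hasDerivAt : ∀ t ∈ Ici a, HasDerivAt x (x' t) t
  hasDerivAt_velocity : ∀ t ∈ Ici a, HasDerivAt x' (x'' t) t
  equation : ∀ t ∈ Ici a, x'' t + γ t • x' t + Φ' (x t) = g t

section Lyapunov

variable {H : Type*} [NormedAddCommGroup H] [InnerProductSpace ℝ H]

/-- The combination `p x' + 2 p' (x - z)` of the velocity and the displacement from the anchor `z`,
whose squared norm is the kinetic part of `lyapunov`. -/
def anchoredMomentum (z : H) (p p' : ℝ → ℝ) (x x' : ℝ → H) (t : ℝ) : H :=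
  p t • x' t + (2 * p' t) • (x t - z)

/-- The Lyapunov function of the heavy ball equation with damping `c / p`, anchored at `z`. The
functions `p'` and `p''` stand for the derivatives of `p`, and `x'` for that of `x`. -/
noncomputable def lyapunov (c : ℝ) (Φ : H → ℝ) (z : H) (p p' p'' : ℝ → ℝ) (x x' : ℝ → H) (t : ℝ) :
    ℝ :=
  p t ^ 2 * (Φ (x t) - Φ z) + ‖anchoredMomentum z p p' x x' t‖ ^ 2 / 2
    + (c * p' t - 3 * p' t ^ 2 - p t * p'' t) * ‖x t - z‖ ^ 2

variable {Φ : H → ℝ} {Φ' : H → H} {z : H} {a c θ t : ℝ} {p p' p'' p''' : ℝ → ℝ}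
  {g x x' x'' : ℝ → H}

theorem hasDerivAt_anchoredMomentum (hp : IsDampingWeight a p p' p'' p''')
    (hx : IsHeavyBallSolution a (fun t ↦ c / p t) Φ' g x x' x'') (ht : t ∈ Ici a) :
    HasDerivAt (anchoredMomentum z p p' x x')
      ((3 * p' t - c) • x' t + (2 * p'' t) • (x t - z) + p t • (g t - Φ' (x t))) t := by
  have hp0 : p t ≠ 0 := (hp.pos t ht).ne'
  have hderiv := ((hp.hasDerivAt t ht).smul (hx.hasDerivAt_velocity t ht)).add
    (((hp.hasDerivAt_deriv t ht).const_mul 2).smul ((hx.hasDerivAt t ht).sub_const z))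
  have hg : g t = x'' t + (c / p t) • x' t + Φ' (x t) := (hx.equation t ht).symm
  refine hderiv.congr_deriv ?_
  rw [hg]
  match_scalars <;> field_simp <;> ring

theorem sq_norm_anchoredMomentum_le_lyapunov (hz : ∀ u, Φ z ≤ Φ u)
    (hp : IsDampingWeight a p p' p'' p''') (ht : t ∈ Ici a) (hpc : 3 * p' t ≤ c) :
    ‖anchoredMomentum z p p' x x' t‖ ^ 2 / 2 ≤ lyapunov c Φ z p p' p'' x x' t := by
  have hpot : 0 ≤ p t ^ 2 * (Φ (x t) - Φ z) :=
    mul_nonneg (sq_nonneg _) (sub_nonneg.2 (hz _))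
  have hcoef : 0 ≤ c * p' t - 3 * p' t ^ 2 - p t * p'' t := by
    linarith [mul_nonneg (hp.deriv_nonneg t ht) (sub_nonneg.2 hpc),
      mul_nonpos_of_nonneg_of_nonpos (hp.pos t ht).le (hp.deriv_deriv_nonpos t ht)]
  unfold lyapunov
  linarith [mul_nonneg hcoef (sq_nonneg ‖x t - z‖)]

variable [CompleteSpace H]

theorem sub_le_inner_gradient_of_convexOn (hΦ : ConvexOn ℝ univ Φ) {u d : H}
    (hd : HasGradientAt Φ d u) (v : H) : Φ u - Φ v ≤ ⟪d, u - v⟫ := by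
  have hconv : ConvexOn ℝ univ (fun r : ℝ ↦ Φ (AffineMap.lineMap v u r)) := by
    simpa only [preimage_univ, Function.comp_def] using
      hΦ.comp_affineMap (AffineMap.lineMap v u : ℝ →ᵃ[ℝ] H)
  have hline : HasDerivAt (fun r : ℝ ↦ Φ (AffineMap.lineMap v u r)) ⟪d, u - v⟫ 1 := by
    have hfd : HasFDerivAt Φ (InnerProductSpace.toDual ℝ H d) (AffineMap.lineMap v u (1 : ℝ)) := by
      simpa only [AffineMap.lineMap_apply_one] using hd.hasFDerivAt
    exact hfd.comp_hasDerivAt (1 : ℝ) AffineMap.hasDerivAt_lineMap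
  simpa [slope_def_field] using
    hconv.slope_le_of_hasDerivAt (mem_univ 0) (mem_univ 1) one_pos hline

theorem hasDerivAt_lyapunov (hΦ : ∀ u, HasGradientAt Φ (Φ' u) u)
    (hp : IsDampingWeight a p p' p'' p''')
    (hx : IsHeavyBallSolution a (fun t ↦ c / p t) Φ' g x x' x'') (ht : t ∈ Ici a) :
    HasDerivAt (lyapunov c Φ z p p' p'' x x')
      (2 * p t * p' t * (Φ (x t) - Φ z - ⟪Φ' (x t), x t - z⟫)
        - (c - 3 * p' t) * (p t * ‖x' t‖ ^ 2)
        + p t * ⟪g t, anchoredMomentum z p p' x x' t⟫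
        + ((c - 3 * p' t) * p'' t - p t * p''' t) * ‖x t - z‖ ^ 2) t := by
  have hpt := hp.hasDerivAt t ht
  have hp't := hp.hasDerivAt_deriv t ht
  have hp''t := hp.hasDerivAt_deriv_deriv t ht
  have hxt := hx.hasDerivAt t ht
  have hΦx : HasDerivAt (fun t ↦ Φ (x t)) ⟪Φ' (x t), x' t⟫ t :=
    (hΦ (x t)).hasFDerivAt.comp_hasDerivAt t hxt
  have hpotential := (hpt.pow 2).mul (hΦx.sub_const (Φ z))
  have hkinetic := (hasDerivAt_anchoredMomentum (z := z) hp hx ht).norm_sq.div_const 2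
  have hdisplacement := (((hp't.const_mul c).sub ((hp't.pow 2).const_mul 3)).sub
    (hpt.mul hp''t)).mul (hxt.sub_const z).norm_sq
  refine ((hpotential.add hkinetic).add hdisplacement).congr_deriv ?_
  simp only [anchoredMomentum, Pi.pow_apply, Pi.mul_apply, Pi.sub_apply]
  generalize x t - z = y
  simp only [inner_add_left, inner_add_right, inner_sub_right, real_inner_smul_left,
    real_inner_smul_right, real_inner_self_eq_norm_sq]
  rw [real_inner_comm (x' t) y, real_inner_comm (g t) y, real_inner_comm (g t) (x' t),
    real_inner_comm (Φ' (x t)) y, real_inner_comm (Φ' (x t)) (x' t)]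
  ring

theorem deriv_lyapunov_le (hΦconv : ConvexOn ℝ univ Φ) (hΦ : ∀ u, HasGradientAt Φ (Φ' u) u)
    (hz : ∀ u, Φ z ≤ Φ u) (hp : IsDampingWeight a p p' p'' p''')
    (hx : IsHeavyBallSolution a (fun t ↦ c / p t) Φ' g x x' x'') (ht : t ∈ Ici a)
    (hpθ : p' t ≤ θ) (hθ : 3 * θ ≤ c) :
    deriv (lyapunov c Φ z p p' p'' x x') t ≤ -((c - 3 * θ) * (p t * ‖x' t‖ ^ 2))
      + p t * ‖g t‖ * (1 + lyapunov c Φ z p p' p'' x x' t) := by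
  have hp0 := (hp.pos t ht).le
  have hpc : 0 ≤ c - 3 * p' t := by linarith
  have hpotential : 2 * p t * p' t * (Φ (x t) - Φ z - ⟪Φ' (x t), x t - z⟫) ≤ 0 :=
    mul_nonpos_of_nonneg_of_nonpos (mul_nonneg (by positivity) (hp.deriv_nonneg t ht))
      (sub_nonpos.2 (sub_le_inner_gradient_of_convexOn hΦconv (hΦ _) z))
  have hfriction : (c - 3 * θ) * (p t * ‖x' t‖ ^ 2) ≤ (c - 3 * p' t) * (p t * ‖x' t‖ ^ 2) := by
    gcongr
  have hdisplacement : ((c - 3 * p' t) * p'' t - p t * p''' t) * ‖x t - z‖ ^ 2 ≤ 0 :=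
    mul_nonpos_of_nonpos_of_nonneg
      (by linarith [mul_nonpos_of_nonneg_of_nonpos hpc (hp.deriv_deriv_nonpos t ht),
        mul_nonneg hp0 (hp.deriv_deriv_deriv_nonneg t ht)]) (sq_nonneg _)
  have hmomentum : ‖anchoredMomentum z p p' x x' t‖ ≤ 1 + lyapunov c Φ z p p' p'' x x' t := by
    have hle : ‖anchoredMomentum z p p' x x' t‖ ^ 2 / 2 ≤ lyapunov c Φ z p p' p'' x x' t :=
      sq_norm_anchoredMomentum_le_lyapunov hz hp ht (by linarith)
    linarith [sq_nonneg (‖anchoredMomentum z p p' x x' t‖ - 1)]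
  have hsource : p t * ⟪g t, anchoredMomentum z p p' x x' t⟫
      ≤ p t * ‖g t‖ * (1 + lyapunov c Φ z p p' p'' x x' t) := calc
    _ ≤ p t * (‖g t‖ * ‖anchoredMomentum z p p' x x' t‖) := by
      gcongr
      exact real_inner_le_norm _ _
    _ = p t * ‖g t‖ * ‖anchoredMomentum z p p' x x' t‖ := (mul_assoc _ _ _).symm
    _ ≤ _ := by gcongr
  rw [(hasDerivAt_lyapunov hΦ hp hx ht).deriv]
  linarith

theorem heavy_ball_velocity_integrable_general (hΦconv : ConvexOn ℝ univ Φ)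
    (hΦ : ∀ u, HasGradientAt Φ (Φ' u) u) (hz : ∀ u, Φ z ≤ Φ u)
    (hp : IsDampingWeight a p p' p'' p''') (hθ : 3 * θ < c) (hpθ : ∀ᶠ t in atTop, p' t ≤ θ)
    (hx : IsHeavyBallSolution a (fun t ↦ c / p t) Φ' g x x' x'')
    (hg : IntegrableOn (fun t ↦ p t * ‖g t‖) (Ici a)) :
    IntegrableOn (fun t ↦ p t * ‖x' t‖ ^ 2) (Ici a) := by
  have hcont : ContinuousOn (fun t ↦ p t * ‖x' t‖ ^ 2) (Ici a) :=
    (HasDerivAt.continuousOn hp.hasDerivAt).mul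
      ((HasDerivAt.continuousOn hx.hasDerivAt_velocity).norm.pow 2)
  obtain ⟨T, hT⟩ := eventually_atTop.1 ((eventually_ge_atTop a).and hpθ)
  have hTa : Ici T ⊆ Ici a := Ici_subset_Ici.2 (hT T le_rfl).1
  have hV (t : ℝ) (ht : t ∈ Ici T) :=
    (hasDerivAt_lyapunov (z := z) hΦ hp hx (hTa ht)).differentiableAt.hasDerivAt
  have htail : IntegrableOn (fun t ↦ (c - 3 * θ) * (p t * ‖x' t‖ ^ 2)) (Ici T) := by
    refine integrableOn_Ici_of_deriv_right_le_neg_add_mul (b := fun t ↦ p t * ‖g t‖)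
      (HasDerivAt.continuousOn hV)
      (fun t ht ↦ (hV t (mem_Ici_of_Ioi ht)).hasDerivWithinAt) (fun t ht ↦ ?_)
      ((continuousOn_const.mul (hcont.mono hTa)).locallyIntegrableOn measurableSet_Ici)
      (fun t ht ↦ mul_nonneg (by linarith) (mul_nonneg (hp.pos t (hTa ht)).le (sq_nonneg _)))
      (hg.mono_set hTa) (fun t ht ↦ mul_nonneg (hp.pos t (hTa ht)).le (norm_nonneg _))
      (fun t ht ↦ deriv_lyapunov_le hΦconv hΦ hz hp hx (hTa (mem_Ici_of_Ioi ht))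
        (hT t (mem_Ici_of_Ioi ht)).2 hθ.le)
    exact (by positivity : (0 : ℝ) ≤ _).trans
      (sq_norm_anchoredMomentum_le_lyapunov hz hp (hTa ht) (by linarith [(hT t ht).2]))
  rw [integrableOn_Ici_iff_integrableAtFilter_atTop]
  exact ⟨⟨Ici T, Ici_mem_atTop T,
    (integrable_const_mul_iff (sub_pos.2 hθ).ne'.isUnit _).1 htail⟩,
    hcont.locallyIntegrableOn measurableSet_Ici⟩

end Lyapunov

theorem heavy_ball_velocity_integrable
    {H : Type*} [NormedAddCommGroup H] [InnerProductSpace ℝ H] [CompleteSpace H]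
    (c α : ℝ) (hc : 0 < c) (hα0 : 0 ≤ α) (hα1 : α < 1)
    (Φ : H → ℝ) (Φ' : H → H) (Φstar : ℝ)
    (hΦconv : ConvexOn ℝ Set.univ Φ)
    (hΦdiff : ∀ u : H, HasGradientAt Φ (Φ' u) u)
    (hΦcont : Continuous Φ')
    (hargmin : {v : H | ∀ u, Φ v ≤ Φ u}.Nonempty)
    (hΦstar : ∀ v ∈ {v : H | ∀ u, Φ v ≤ Φ u}, Φ v = Φstar)
    (g : ℝ → H) (hg : IntegrableOn g (Ici (0:ℝ)))
    (x x' x'' : ℝ → H)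
    (hx1 : ∀ t ∈ Ici (0:ℝ), HasDerivAt x (x' t) t)
    (hx2 : ∀ t ∈ Ici (0:ℝ), HasDerivAt x' (x'' t) t)
    (hode : ∀ t ∈ Ici (0:ℝ),
      x'' t + (c / (1 + t) ^ α) • x' t + Φ' (x t) = g t)
    (hgα : IntegrableOn (fun t => (1 + t) ^ α * ‖g t‖) (Ici (0:ℝ))) :
    IntegrableOn (fun t => (1 + t) ^ α * ‖x' t‖ ^ 2) (Ici (0:ℝ)) := by
  obtain ⟨z, hz⟩ := hargmin
  have hslope : ∀ᶠ t in atTop, α * (1 + t) ^ (α - 1) ≤ c / 6 :=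
    (tendsto_const_mul_one_add_rpow_atTop_zero α (by linarith)).eventually_le_const (by positivity)
  exact heavy_ball_velocity_integrable_general hΦconv hΦdiff hz
    (isDampingWeight_one_add_rpow hα0 hα1.le) (by linarith) hslope ⟨hx1, hx2, hode⟩ hgα
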